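/- Let X be a complex Banach space and L an invertible bounded linear operator on X. Then L has the shadowing property if and only if the bounded linear operator L_∞ : ℓ^∞(X) → ℓ^∞(X) defined by (L_∞(ξ))ₙ = ξₙ₊₁ − L(ξₙ) is surjective. -/

import Mathlib

open Filter Topology

variable {X : Type*} [NormedAddCommGroup X] [NormedSpace ℂ X] [CompleteSpace X]

/-- `L` has the shadowing property. -/
def ShadowingProperty (L : X ≃L[ℂ] X) : Prop :=
  ∀ ε > (0 : ℝ), ∃ δ > (0 : ℝ), ∀ x : ℤ → X,
    (∀ n : ℤ, ‖L (x n) - x (n + 1)‖ ≤ δ) →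
    ∃ p : X, ∀ n : ℤ, ‖(L ^ n) p - x n‖ ≤ ε

/-!
If `x (n + 1) - L (x n) = ξ n`, then the solutions of the same equation are exactly the sequences
`x - z` with `z` an orbit of `L`, so an orbit within `ε` of the pseudo-orbit `x` is the same thing
as a solution of norm at most `ε`. Hence `δ`-pseudo-orbits are `ε`-shadowed if and only if `L_∞`
maps the closed `ε`-ball onto a superset of the closed `δ`-ball, and shadowing says that `L_∞` is
open at `0`. By linearity and the open mapping theorem this is surjectivity.
-/

open Metric BoundedContinuousFunction

theorem exists_int_seq_apply_add_one {α : Type*} [Nonempty α] (e : ℤ → α ≃ α) :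
    ∃ x : ℤ → α, ∀ n, x (n + 1) = e n (x n) := by
  obtain ⟨a⟩ := ‹Nonempty α›
  refine ⟨fun n => Int.inductionOn' n 0 a (fun k _ y => e k y)
    (fun k _ y => (e (k - 1)).symm y), fun n => ?_⟩
  rcases le_or_gt 0 n with hn | hn
  · exact Int.inductionOn'_add_one hn
  · have hpred := Int.inductionOn'_sub_one (zero := a) (succ := fun k _ y => e k y)
      (pred := fun k _ y => (e (k - 1)).symm y) (Int.add_one_le_of_lt hn)
    simp only [add_sub_cancel_right] at hpred
    simp only [hpred, Equiv.apply_symm_apply]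

theorem exists_apply_add_one_sub_eq {G : Type*} [AddGroup G] (e : G ≃ G) (ξ : ℤ → G) :
    ∃ x : ℤ → G, ∀ n, x (n + 1) - e (x n) = ξ n := by
  obtain ⟨x, hx⟩ := exists_int_seq_apply_add_one fun n => e.trans (Equiv.addLeft (ξ n))
  exact ⟨x, fun n => sub_eq_of_eq_add (hx n)⟩

section Orbit

variable {R E : Type*} [Semiring R] [TopologicalSpace E] [AddCommMonoid E] [Module R E]

theorem zpow_add_one_apply (L : E ≃L[R] E) (n : ℤ) (p : E) : (L ^ (n + 1)) p = L ((L ^ n) p) := by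
  rw [add_comm, zpow_one_add]
  rfl

theorem zpow_apply_eq_of_apply_add_one {L : E ≃L[R] E} {z : ℤ → E}
    (hz : ∀ n, z (n + 1) = L (z n)) (n : ℤ) : (L ^ n) (z 0) = z n := by
  induction n using Int.induction_on with
  | zero => rfl
  | succ k ih => rw [zpow_add_one_apply, ih, hz]
  | pred k ih =>
    apply L.injective
    rw [← zpow_add_one_apply, ← hz, sub_add_cancel, ih]

end Orbit

theorem surjective_of_isOpenMap {R E F : Type*} [Ring R] [TopologicalSpace R]
    [NeBot (𝓝[{a : R | IsUnit a}] 0)] [TopologicalSpace E] [AddCommMonoid E] [Module R E]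
    [TopologicalSpace F] [AddCommGroup F] [ContinuousAdd F] [Module R F] [ContinuousSMul R F]
    {T : E →ₗ[R] F} (hT : IsOpenMap T) : Function.Surjective T := by
  rw [← LinearMap.range_eq_top]
  refine Submodule.eq_top_of_nonempty_interior' _ ⟨0, ?_⟩
  rw [LinearMap.coe_range, hT.isOpen_range.interior_eq]
  exact ⟨0, map_zero T⟩

theorem isOpenMap_iff_closedBall_subset_image {G E F : Type*} [SeminormedAddCommGroup E]
    [SeminormedAddCommGroup F] [FunLike G E F] [AddMonoidHomClass G E F] {T : G} :
    IsOpenMap T ↔ ∀ ε > 0, ∃ δ > 0, closedBall 0 δ ⊆ T '' closedBall 0 ε := by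
  rw [IsTopologicalAddGroup.isOpenMap_iff_nhds_zero,
    nhds_basis_closedBall.le_basis_iff (nhds_basis_closedBall.map T)]

section Shadowing

variable {𝕜 E : Type*} [NontriviallyNormedField 𝕜]

section Seminormed

variable [SeminormedAddCommGroup E] [NormedSpace 𝕜 E]

/-- Every `δ`-pseudo-orbit of `L` is `ε`-shadowed by an orbit. -/
def PseudoOrbitsShadowed (L : E ≃L[𝕜] E) (δ ε : ℝ) : Prop :=
  ∀ x : ℤ → E, (∀ n, ‖L (x n) - x (n + 1)‖ ≤ δ) → ∃ p : E, ∀ n : ℤ, ‖(L ^ n) p - x n‖ ≤ ε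

/-- The shadowing property over an arbitrary nontrivially normed field; over `ℂ` it is
definitionally `ShadowingProperty`. -/
def HasShadowing (L : E ≃L[𝕜] E) : Prop :=
  ∀ ε > 0, ∃ δ > 0, PseudoOrbitsShadowed L δ ε

/-- The operator `L_∞`, with `ℓ^∞` encoded as the bounded continuous functions on the discrete
space `ℤ`. -/
noncomputable def linftyOp (L : E →L[𝕜] E) : (ℤ →ᵇ E) →L[𝕜] (ℤ →ᵇ E) :=
  compContinuousCLM E 𝕜 ⟨(· + 1), continuous_of_discreteTopology⟩ - L.compLeftContinuousBounded ℤ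

theorem linftyOp_apply (L : E →L[𝕜] E) (η : ℤ →ᵇ E) (n : ℤ) :
    linftyOp L η n = η (n + 1) - L (η n) :=
  rfl

theorem linftyOp_surjective_iff {L : E →L[𝕜] E} :
    Function.Surjective (linftyOp L) ↔
      ∀ ξ : ℤ → E, (∃ M : ℝ, ∀ n, ‖ξ n‖ ≤ M) →
        ∃ η : ℤ → E, (∃ M : ℝ, ∀ n, ‖η n‖ ≤ M) ∧ ∀ n, η (n + 1) - L (η n) = ξ n := by
  constructor
  · rintro h ξ ⟨M, hξ⟩
    obtain ⟨η, hη⟩ := h (ofNormedAddCommGroupDiscrete ξ M hξ)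
    exact ⟨η, ⟨‖η‖, η.norm_coe_le_norm⟩, fun n => by rw [← linftyOp_apply, hη]; rfl⟩
  · intro h ξ
    obtain ⟨η, ⟨M, hM⟩, hη⟩ := h ξ ⟨‖ξ‖, ξ.norm_coe_le_norm⟩
    exact ⟨ofNormedAddCommGroupDiscrete η M hM, DFunLike.ext _ _ hη⟩

theorem PseudoOrbitsShadowed.closedBall_subset_image {L : E ≃L[𝕜] E} {δ ε : ℝ}
    (h : PseudoOrbitsShadowed L δ ε) :
    closedBall 0 δ ⊆ linftyOp (L : E →L[𝕜] E) '' closedBall 0 ε := by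
  intro ξ hξ
  rw [mem_closedBall_zero_iff, norm_le_of_nonempty] at hξ
  obtain ⟨x, hx⟩ : ∃ x : ℤ → E, ∀ n, x (n + 1) - L (x n) = ξ n :=
    exists_apply_add_one_sub_eq L.toEquiv ξ
  obtain ⟨p, hp⟩ := h x fun n => by rw [norm_sub_rev, hx]; exact hξ n
  have hη (n : ℤ) : ‖x n - (L ^ n) p‖ ≤ ε := by rw [norm_sub_rev]; exact hp n
  refine ⟨ofNormedAddCommGroupDiscrete (fun n => x n - (L ^ n) p) ε hη, ?_, ?_⟩
  · rw [mem_closedBall_zero_iff, norm_le_of_nonempty]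
    exact hη
  · ext n
    calc linftyOp (L : E →L[𝕜] E) (ofNormedAddCommGroupDiscrete _ ε hη) n
      _ = x (n + 1) - (L ^ (n + 1)) p - L (x n - (L ^ n) p) := linftyOp_apply _ _ n
      _ = x (n + 1) - L (x n) := by
        rw [zpow_add_one_apply, map_sub, sub_sub_sub_cancel_right]
      _ = ξ n := hx n

theorem pseudoOrbitsShadowed_of_closedBall_subset_image {L : E ≃L[𝕜] E} {δ ε : ℝ}
    (h : closedBall 0 δ ⊆ linftyOp (L : E →L[𝕜] E) '' closedBall 0 ε) :
    PseudoOrbitsShadowed L δ ε := by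
  intro x hx
  have hξ (n : ℤ) : ‖x (n + 1) - L (x n)‖ ≤ δ := by rw [norm_sub_rev]; exact hx n
  obtain ⟨η, hηε, hη⟩ : ofNormedAddCommGroupDiscrete _ δ hξ ∈ _ :=
    h (mem_closedBall_zero_iff.2 (norm_le_of_nonempty.2 hξ))
  have horbit (n : ℤ) : x (n + 1) - η (n + 1) = L (x n - η n) := by
    have hsolve : η (n + 1) - L (η n) = x (n + 1) - L (x n) :=
      (linftyOp_apply (L : E →L[𝕜] E) η n).symm.trans (DFunLike.congr_fun hη n)
    rw [map_sub, sub_eq_sub_iff_sub_eq_sub, hsolve]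
  refine ⟨x 0 - η 0, fun n => ?_⟩
  rw [zpow_apply_eq_of_apply_add_one (z := fun n => x n - η n) horbit, sub_sub_cancel_left,
    norm_neg]
  exact norm_le_of_nonempty.1 (mem_closedBall_zero_iff.1 hηε) n

theorem hasShadowing_iff_isOpenMap_linftyOp {L : E ≃L[𝕜] E} :
    HasShadowing L ↔ IsOpenMap (linftyOp (L : E →L[𝕜] E)) := by
  have hshadow (δ ε : ℝ) : PseudoOrbitsShadowed L δ ε ↔
      closedBall 0 δ ⊆ linftyOp (L : E →L[𝕜] E) '' closedBall 0 ε :=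
    ⟨PseudoOrbitsShadowed.closedBall_subset_image, pseudoOrbitsShadowed_of_closedBall_subset_image⟩
  simp only [HasShadowing, hshadow]
  exact isOpenMap_iff_closedBall_subset_image.symm

end Seminormed

theorem shadowing_iff_Linfty_surjective_general [NormedAddCommGroup E] [NormedSpace 𝕜 E]
    [CompleteSpace E] (L : E ≃L[𝕜] E) :
    HasShadowing L ↔
      ∀ ξ : ℤ → E, (∃ M : ℝ, ∀ n : ℤ, ‖ξ n‖ ≤ M) →
        ∃ η : ℤ → E, (∃ M : ℝ, ∀ n : ℤ, ‖η n‖ ≤ M) ∧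
          ∀ n : ℤ, η (n + 1) - L (η n) = ξ n :=
  calc HasShadowing L
    _ ↔ IsOpenMap (linftyOp (L : E →L[𝕜] E)) := hasShadowing_iff_isOpenMap_linftyOp
    _ ↔ Function.Surjective (linftyOp (L : E →L[𝕜] E)) :=
      ⟨surjective_of_isOpenMap (T := (linftyOp (L : E →L[𝕜] E)).toLinearMap),
        (linftyOp (L : E →L[𝕜] E)).isOpenMap⟩
    _ ↔ _ := linftyOp_surjective_iff

end Shadowing

/-- `L` has the shadowing property iff the operator
`L_∞ : ℓ^∞(X) → ℓ^∞(X)`, `(L_∞ ξ)ₙ = ξₙ₊₁ - L ξₙ`, is surjective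
(surjectivity stated concretely on bounded two-sided sequences). -/
theorem shadowing_iff_Linfty_surjective (L : X ≃L[ℂ] X) :
    ShadowingProperty L ↔
      ∀ ξ : ℤ → X, (∃ M : ℝ, ∀ n : ℤ, ‖ξ n‖ ≤ M) →
        ∃ η : ℤ → X, (∃ M : ℝ, ∀ n : ℤ, ‖η n‖ ≤ M) ∧
          ∀ n : ℤ, η (n + 1) - L (η n) = ξ n :=
  shadowing_iff_Linfty_surjective_general L
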